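/- (Subject Expansion.) If Γ;Δ ⊢ N : σ is derivable in the multi-type system for the λI-calculus and M →β N, then Γ;Δ ⊢ M : σ is derivable. -/

import Mathlib

set_option maxHeartbeats 1000000

/-! # λ-terms (named variables over ℕ) -/

inductive Lam : Type
  | var : ℕ → Lam
  | app : Lam → Lam → Lam
  | lam : ℕ → Lam → Lam
deriving DecidableEq

namespace Lam

/-- Free variables of a λ-term. -/
def fv : Lam → Finset ℕ
  | var x => {x}
  | app M N => M.fv ∪ N.fv
  | lam x M => M.fv.erase x

/-- λI-terms: every abstraction `λx.M` satisfies `x ∈ fv M`. -/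
def IsI : Lam → Prop
  | var _ => True
  | app M N => M.IsI ∧ N.IsI
  | lam x M => x ∈ M.fv ∧ M.IsI

/-- A variable not belonging to a given finite set. -/
def freshVar (s : Finset ℕ) : ℕ := (s.sup id) + 1

/-- Capture-avoiding simultaneous substitution (bound variables are freshened). -/
def substF : Lam → (ℕ → Lam) → Lam
  | var x, σ => σ x
  | app M N, σ => app (M.substF σ) (N.substF σ)
  | lam x M, σ =>
      let y := freshVar ((M.fv.erase x).biUnion fun z => (σ z).fv)
      lam y (M.substF (Function.update σ x (var y)))

/-- Capture-avoiding substitution `M[N/x]`. -/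
def subst (M : Lam) (x : ℕ) (N : Lam) : Lam :=
  M.substF fun z => if z = x then N else var z

/-- Being an abstraction. -/
def isAbs : Lam → Prop
  | lam _ _ => True
  | _ => False

end Lam

/-- One-step β-reduction. -/
inductive Beta : Lam → Lam → Prop
  | beta (x : ℕ) (M N : Lam) : Beta (.app (.lam x M) N) (M.subst x N)
  | appL {M M' : Lam} (N : Lam) : Beta M M' → Beta (.app M N) (.app M' N)
  | appR {N N' : Lam} (M : Lam) : Beta N N' → Beta (.app M N) (.app M N')
  | lam (x : ℕ) {M M' : Lam} : Beta M M' → Beta (.lam x M) (.lam x M')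

/-- One-step head reduction. -/
inductive Head : Lam → Lam → Prop
  | beta (x : ℕ) (M N : Lam) : Head (.app (.lam x M) N) (M.subst x N)
  | app {M M' : Lam} (N : Lam) : ¬ M.isAbs → Head M M' → Head (.app M N) (.app M' N)
  | lam (x : ℕ) {M M' : Lam} : Head M M' → Head (.lam x M) (.lam x M')

/-- Iterated head reduction. -/
def HeadStar : Lam → Lam → Prop := Relation.ReflTransGen Head

/-- Terms of the shape `y M₁ ⋯ Mₖ`. -/
inductive Neutral : Lam → Prop
  | var (x : ℕ) : Neutral (.var x)
  | app {M : Lam} (N : Lam) : Neutral M → Neutral (.app M N)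

/-- Head normal forms `λx₁…xₙ.y M₁ ⋯ Mₖ`. -/
inductive Hnf : Lam → Prop
  | neutral {M : Lam} : Neutral M → Hnf M
  | lam (x : ℕ) {M : Lam} : Hnf M → Hnf (.lam x M)

/-- `M` has a head normal form. -/
def HasHnf (M : Lam) : Prop := ∃ H, HeadStar M H ∧ Hnf H

/-! # Multi-types -/

/-- Simple types: atoms `a ∈ ℕ`, arrows `[]_X → β` and `[α₀,…,αₙ] → β`. -/
inductive STy : Type
  | atom : ℕ → STy
  | arr0 : Finset ℕ → STy → STy
  | arrP : STy → List STy → STy → STy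

/-- Multiset types: the annotated empty multiset `[]_X` or a
non-empty multiset `[α₀,…,αₙ]` (head plus tail). -/
inductive MTy : Type
  | empty : Finset ℕ → MTy
  | mk : STy → List STy → MTy

/-- The arrow type `ᾱ → β`. -/
def MTy.arr : MTy → STy → STy
  | .empty X, β => .arr0 X β
  | .mk α l, β => .arrP α l β

/-- The underlying multiset of simple types of a multiset type. -/
def MTy.toM : MTy → Multiset STy
  | .empty _ => 0
  | .mk α l => α ::ₘ (l : Multiset STy)

/-- Multi-types: `σ ::= e_X | α`. -/
inductive OTy : Type
  | esum : Finset ℕ → OTy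
  | simple : STy → OTy

mutual
/-- Atoms occurring in a simple type. -/
def STy.atoms : STy → Finset ℕ
  | .atom a => {a}
  | .arr0 _ β => β.atoms
  | .arrP α l β => α.atoms ∪ STy.atomsL l ∪ β.atoms
def STy.atomsL : List STy → Finset ℕ
  | [] => ∅
  | α :: l => α.atoms ∪ STy.atomsL l
end

/-! # Environments -/

/-- Type environments: finitely supported maps from variables
to finite multisets of simple types; added pointwise. -/
abbrev TEnv := ℕ →₀ Multiset STy

/-- Variable environments: finite partial maps from variables to finite
sets of variables. -/
abbrev VEnv := Finmap (fun _ : ℕ => Finset ℕ)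

namespace VEnv

/-- `⋃Δ`: the union of the values of `Δ`. -/
def uni (Δ : VEnv) : Finset ℕ :=
  Δ.keys.biUnion fun x => (Δ.lookup x).getD ∅

/-- Coherence `Δ₀ ≍ Δ₁`: agreement on the common domain. -/
def Coh (Δ₀ Δ₁ : VEnv) : Prop :=
  ∀ x : ℕ, x ∈ Δ₀ → x ∈ Δ₁ → Δ₀.lookup x = Δ₁.lookup x

end VEnv

/-! # The multi-type system for the λI-calculus -/

mutual
/-- Typing judgement `Γ; Δ ⊢ M : σ`. -/
inductive Der : TEnv → VEnv → Lam → OTy → Prop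
  | esum {Δ : VEnv} {M : Lam} :
      Δ.keys = M.fv → Der 0 Δ M (.esum Δ.uni)
  | ax (x : ℕ) (α : STy) (X : Finset ℕ) :
      Der (Finsupp.single x {α}) (Finmap.singleton x X) (.var x) (.simple α)
  | app {Γ₀ Γ₁ : TEnv} {Δ₀ Δ₁ : VEnv} {M N : Lam} {m : MTy} {β : STy} :
      Der Γ₀ Δ₀ M (.simple (m.arr β)) → DerB Γ₁ Δ₁ N m → VEnv.Coh Δ₀ Δ₁ →
      Der (Γ₀ + Γ₁) (Δ₀ ∪ Δ₁) (.app M N) (.simple β)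
  | lam0 {Γ : TEnv} {Δ : VEnv} {x : ℕ} {X : Finset ℕ} {M : Lam} {β : STy} :
      Γ x = 0 → x ∉ Δ → Der Γ (Δ.insert x X) M (.simple β) →
      Der Γ Δ (.lam x M) (.simple (.arr0 X β))
  | lamP {Γ : TEnv} {Δ : VEnv} {x : ℕ} {X : Finset ℕ} {M : Lam} {α : STy}
      {l : List STy} {β : STy} :
      Γ x = 0 → x ∉ Δ →
      Der (Γ + Finsupp.single x (MTy.mk α l).toM) (Δ.insert x X) M (.simple β) →
      Der Γ Δ (.lam x M) (.simple (.arrP α l β))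

/-- Typing judgement `Γ; Δ ⊢! M : ᾱ`. -/
inductive DerB : TEnv → VEnv → Lam → MTy → Prop
  | bang0 {Δ : VEnv} {M : Lam} :
      Δ.keys = M.fv → DerB 0 Δ M (.empty Δ.uni)
  | one {Γ : TEnv} {Δ : VEnv} {M : Lam} {α : STy} :
      Der Γ Δ M (.simple α) → DerB Γ Δ M (.mk α [])
  | cons {Γ₀ Γ₁ : TEnv} {Δ : VEnv} {M : Lam} {α α' : STy} {l : List STy} :
      Der Γ₀ Δ M (.simple α) → DerB Γ₁ Δ M (.mk α' l) →
      DerB (Γ₀ + Γ₁) Δ M (.mk α (α' :: l))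
end

/-- The multi-type interpretation `⟦M⟧`. -/
def interp (M : Lam) : Set (TEnv × VEnv × OTy) :=
  { p | Der p.1 p.2.1 M p.2.2 }

/-! # Ohana trees (coinductive equality, as a greatest fixpoint) -/

/-- Matching of the spines `y M₁ ⋯ Mₖ` of two head normal forms:
same head variable, same number of arguments, arguments related by `R`. -/
inductive SpineMatch (R : Lam → Lam → Prop) : Lam → Lam → Prop
  | var (y : ℕ) : SpineMatch R (.var y) (.var y)
  | app {P Q M N : Lam} : SpineMatch R P Q → R M N →
      SpineMatch R (.app P M) (.app Q N)

/-- Matching of two head normal forms, comparing abstraction prefixes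
up to renaming of the bound variables. -/
inductive HnfMatch (R : Lam → Lam → Prop) : Lam → Lam → Prop
  | base {P Q : Lam} : SpineMatch R P Q → HnfMatch R P Q
  | lam {x y : ℕ} {P Q : Lam} :
      (∀ z : ℕ, z ∉ (P.fv.erase x ∪ Q.fv.erase y) →
        HnfMatch R (P.subst x (.var z)) (Q.subst y (.var z))) →
      HnfMatch R (.lam x P) (.lam y Q)

/-- `R` is an Ohana-tree bisimulation. -/
def OTBisim (R : Lam → Lam → Prop) : Prop :=
  ∀ M N, R M N →
    (¬ HasHnf M ∧ ¬ HasHnf N ∧ M.fv = N.fv) ∨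
    (∃ P Q, HeadStar M P ∧ HeadStar N Q ∧ Hnf P ∧ Hnf Q ∧ HnfMatch R P Q)

/-- Equality of Ohana trees: `OT(M) = OT(N)`. -/
def OTEq (M N : Lam) : Prop := ∃ R, OTBisim R ∧ R M N

/-! # λI-resource terms -/

mutual
inductive RTm : Type
  | var : ℕ → RTm
  | lam : ℕ → RTm → RTm
  | app : RTm → RBag → RTm
inductive RBag : Type
  | empty : Finset ℕ → RBag
  | mk : RTm → List RTm → RBag
end

noncomputable instance : DecidableEq RTm := fun _ _ => Classical.dec _
noncomputable instance : DecidableEq RBag := fun _ _ => Classical.dec _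

mutual
/-- Free variables of a resource term. -/
def RTm.fv : RTm → Finset ℕ
  | .var x => {x}
  | .lam x s => s.fv.erase x
  | .app s b => s.fv ∪ b.fv
/-- Free variables of a bag. -/
def RBag.fv : RBag → Finset ℕ
  | .empty X => X
  | .mk h t => h.fv ∪ RTm.fvL t
/-- Free variables of a list of resource terms. -/
def RTm.fvL : List RTm → Finset ℕ
  | [] => ∅
  | h :: t => h.fv ∪ RTm.fvL t
end

mutual
/-- λI-resource terms: in every abstraction `λx.s`, `x` occurs free in `s`. -/
inductive RTm.IsIr : RTm → Prop
  | var (x : ℕ) : RTm.IsIr (.var x)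
  | lam {x : ℕ} {s : RTm} : x ∈ s.fv → RTm.IsIr s → RTm.IsIr (.lam x s)
  | app {s : RTm} {b : RBag} : RTm.IsIr s → RBag.IsIr b → RTm.IsIr (.app s b)
inductive RBag.IsIr : RBag → Prop
  | empty (X : Finset ℕ) : RBag.IsIr (.empty X)
  | mk {h : RTm} {t : List RTm} : RTm.IsIr h → (∀ u ∈ t, RTm.IsIr u) →
      RBag.IsIr (.mk h t)
end

/-- The list of elements of a bag. -/
def RBag.toList : RBag → List RTm
  | .empty _ => []
  | .mk h t => h :: t

/-! Linear (bijective) substitution: `LSub s x ts t` means that `t` is obtained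
by substituting the elements of the list `ts` for the free occurrences of `x`
in `s`, in left-to-right order (annotations of empty bags absorb). -/
mutual
inductive LSub : RTm → ℕ → List RTm → RTm → Prop
  | var_hit (x : ℕ) (t : RTm) : LSub (.var x) x [t] t
  | var_miss {x y : ℕ} : y ≠ x → LSub (.var y) x [] (.var y)
  | lam {x y : ℕ} {s : RTm} {ts : List RTm} {s' : RTm} :
      y ≠ x → y ∉ RTm.fvL ts → LSub s x ts s' →
      LSub (.lam y s) x ts (.lam y s')
  | app {s : RTm} {b : RBag} {x : ℕ} {ts₁ ts₂ : List RTm} {s' : RTm} {b' : RBag} :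
      LSub s x ts₁ s' → LSubB b x ts₂ b' →
      LSub (.app s b) x (ts₁ ++ ts₂) (.app s' b')
inductive LSubB : RBag → ℕ → List RTm → RBag → Prop
  | empty_hit {X : Finset ℕ} {x : ℕ} {ts : List RTm} :
      x ∈ X → LSubB (.empty X) x ts (.empty ((X.erase x) ∪ RTm.fvL ts))
  | empty_miss {X : Finset ℕ} {x : ℕ} :
      x ∉ X → LSubB (.empty X) x [] (.empty X)
  | mk {h : RTm} {t : List RTm} {x : ℕ} {ts₁ ts₂ : List RTm} {h' : RTm}
      {t' : List RTm} :
      LSub h x ts₁ h' → LSubL t x ts₂ t' →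
      LSubB (.mk h t) x (ts₁ ++ ts₂) (.mk h' t')
inductive LSubL : List RTm → ℕ → List RTm → List RTm → Prop
  | nil (x : ℕ) : LSubL [] x [] []
  | cons {h : RTm} {t : List RTm} {x : ℕ} {ts₁ ts₂ : List RTm} {h' : RTm}
      {t' : List RTm} :
      LSub h x ts₁ h' → LSubL t x ts₂ t' →
      LSubL (h :: t) x (ts₁ ++ ts₂) (h' :: t')
end

/-- The root resource reduction step `(λx.s)b →r T`:
`T` is the sum of all results of bijective substitution of the elements
of `b` for the free occurrences of `x` in `s`. -/
def RootRed (x : ℕ) (s : RTm) (b : RBag) (T : Finset RTm) : Prop :=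
  ∀ u : RTm, u ∈ T ↔ ∃ l : List RTm, l.Perm b.toList ∧ LSub s x l u

/-- Pushing an element on top of a bag. -/
def RBag.push (h : RTm) : RBag → RBag
  | .empty _ => .mk h []
  | .mk h' t => .mk h (h' :: t)

mutual
/-- One-step resource reduction of a term to a finite sum. -/
inductive RStep : RTm → Finset RTm → Prop
  | root {x : ℕ} {s : RTm} {b : RBag} {T : Finset RTm} :
      RootRed x s b T → RStep (.app (.lam x s) b) T
  | appL {s : RTm} {T : Finset RTm} {b : RBag} :
      RStep s T → RStep (.app s b) (T.image fun s' => .app s' b)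
  | appB {s : RTm} {b : RBag} {Tb : Finset RBag} :
      RStepB b Tb → RStep (.app s b) (Tb.image fun b' => .app s b')
  | lam {x : ℕ} {s : RTm} {T : Finset RTm} :
      RStep s T → RStep (.lam x s) (T.image fun s' => .lam x s')
/-- One-step resource reduction inside a bag. -/
inductive RStepB : RBag → Finset RBag → Prop
  | head {h : RTm} {t : List RTm} {T : Finset RTm} :
      RStep h T → RStepB (.mk h t) (T.image fun h' => .mk h' t)
  | tail {h h₂ : RTm} {t : List RTm} {B : Finset RBag} :
      RStepB (.mk h₂ t) B → RStepB (.mk h (h₂ :: t)) (B.image (RBag.push h))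
end

/-- One-step resource reduction on finite sums (linear extension). -/
inductive RRed : Finset RTm → Finset RTm → Prop
  | step {S : Finset RTm} {s : RTm} {T : Finset RTm} :
      s ∈ S → RStep s T → RRed S ((S.erase s) ∪ T)

/-- `→r*`. -/
def RRedStar : Finset RTm → Finset RTm → Prop := Relation.ReflTransGen RRed

/-! # The resource multi-type system -/

mutual
/-- Resource typing judgement `Γ; Δ ⊢ s : α`. -/
inductive DerR : TEnv → VEnv → RTm → STy → Prop
  | ax (x : ℕ) (α : STy) (X : Finset ℕ) :
      DerR (Finsupp.single x {α}) (Finmap.singleton x X) (.var x) α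
  | app {Γ₀ Γ₁ : TEnv} {Δ₀ Δ₁ : VEnv} {s : RTm} {b : RBag} {m : MTy} {β : STy} :
      DerR Γ₀ Δ₀ s (m.arr β) → DerRB Γ₁ Δ₁ b m → VEnv.Coh Δ₀ Δ₁ →
      DerR (Γ₀ + Γ₁) (Δ₀ ∪ Δ₁) (.app s b) β
  | lam0 {Γ : TEnv} {Δ : VEnv} {x : ℕ} {X : Finset ℕ} {s : RTm} {β : STy} :
      Γ x = 0 → x ∉ Δ → DerR Γ (Δ.insert x X) s β →
      DerR Γ Δ (.lam x s) (.arr0 X β)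
  | lamP {Γ : TEnv} {Δ : VEnv} {x : ℕ} {X : Finset ℕ} {s : RTm} {α : STy}
      {l : List STy} {β : STy} :
      Γ x = 0 → x ∉ Δ →
      DerR (Γ + Finsupp.single x (MTy.mk α l).toM) (Δ.insert x X) s β →
      DerR Γ Δ (.lam x s) (.arrP α l β)
/-- Resource typing judgement `Γ; Δ ⊢! t̄ : ᾱ`. -/
inductive DerRB : TEnv → VEnv → RBag → MTy → Prop
  | bang0 {Δ : VEnv} : DerRB 0 Δ (.empty Δ.keys) (.empty Δ.uni)
  | one {Γ : TEnv} {Δ : VEnv} {t : RTm} {α : STy} :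
      DerR Γ Δ t α → DerRB Γ Δ (.mk t []) (.mk α [])
  | cons {Γ₀ Γ₁ : TEnv} {Δ : VEnv} {t t' : RTm} {l : List RTm} {α α' : STy}
      {la : List STy} :
      DerR Γ₀ Δ t α → DerRB Γ₁ Δ (.mk t' l) (.mk α' la) →
      DerRB (Γ₀ + Γ₁) Δ (.mk t (t' :: l)) (.mk α (α' :: la))
end

/-! # Taylor expansion -/

/-- `Taylor M s`: the resource term `s` belongs to the Taylor expansion `T(M)`. -/
inductive Taylor : Lam → RTm → Prop
  | var (x : ℕ) : Taylor (.var x) (.var x)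
  | lam {M : Lam} {s : RTm} (x : ℕ) : Taylor M s → Taylor (.lam x M) (.lam x s)
  | app0 {M N : Lam} {s : RTm} : Taylor M s →
      Taylor (.app M N) (.app s (.empty N.fv))
  | appP {M N : Lam} {s t : RTm} {l : List RTm} :
      Taylor M s → Taylor N t → (∀ u ∈ l, Taylor N u) →
      Taylor (.app M N) (.app s (.mk t l))

/-! # Miscellaneous constructions for the last statement -/

/-- The variable environment `Δ_id` mapping each `x ∈ s` to `{x}`. -/
def idEnv (s : Finset ℕ) : VEnv :=
  (s.sort (· ≤ ·)).foldr (fun x Δ => Δ.insert x ({x} : Finset ℕ)) ∅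

/-- The term `y M₁ ⋯ Mₖ`. -/
def Lam.spineApp (y : ℕ) (l : List Lam) : Lam := l.foldl .app (.var y)

/-- The type `[]_{fv N₁} → ⋯ → []_{fv Nₖ} → a`. -/
def yTyRest (a : ℕ) : List Lam → STy
  | [] => .atom a
  | N :: l => .arr0 N.fv (yTyRest a l)

/-- The type `[]_{fv M₁} → ⋯ → [α] → ⋯ → []_{fv Mₖ} → a`, with `[α]`
in the `i`-th argument position (0-based). -/
def yTy (α : STy) (a : ℕ) : List Lam → ℕ → STy
  | [], _ => .atom a
  | _ :: l, 0 => .arrP α [] (yTyRest a l)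
  | N :: l, (i+1) => .arr0 N.fv (yTy α a l i)

/-! A derivation of `Γ; Δ ⊢ M : σ` forces `dom Δ = fv M`, so `Δ` may be replaced by a total map
`f : ℕ → Finset ℕ` restricted to `fv M`. Coherence then disappears, and typability becomes a
predicate defined by recursion on `M`. For this system one proves the converse of the
substitution lemma: if `M[τ]` has type `β` in `Γ`, the occurrences in `M` of each variable `z`
receive a multiset `Γ' z` of types, `M` has type `β` in `Γ'`, and `Γ` is the sum of the
environments in which the terms `τ z` receive the types in `Γ' z`. For a single substitution
`M[N/x]` this splits `Γ` into the part typing `λx.M` and the part typing `N`; when `Γ' x` is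
empty, the annotation `X` of `[]_X` is the union of `f` over `fv N`. Since redexes of the
λI-calculus do not erase, reduction preserves `fv`, hence these annotations. -/

section SumRel

variable {G ι : Type*} [AddCommMonoid G] {P Q : G → ι → Prop} {g g' : G} {a : ι}
  {A A' : Multiset ι}

/-- The additive extension of a relation `P` to multisets: `g` is a sum of elements related by
`P`, one by one, to the elements of `A`. With `P` a typing judgement this is the promotion rule
`(!⁺)`, without its non-emptiness condition. -/
def SumRel (P : G → ι → Prop) (g : G) (A : Multiset ι) : Prop :=
  ∃ S : Multiset G, Multiset.Rel P S A ∧ S.sum = g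

namespace SumRel

theorem zero_iff : SumRel P g 0 ↔ g = 0 := by
  simp [SumRel, Multiset.rel_zero_right, eq_comm]

theorem cons_iff :
    SumRel P g (a ::ₘ A) ↔ ∃ g₀ g₁, P g₀ a ∧ SumRel P g₁ A ∧ g = g₀ + g₁ := by
  constructor
  · rintro ⟨S, hS, rfl⟩
    obtain ⟨g₀, S', ha, hA, rfl⟩ := Multiset.rel_cons_right.1 hS
    exact ⟨g₀, S'.sum, ha, ⟨S', hA, rfl⟩, Multiset.sum_cons g₀ S'⟩
  · rintro ⟨g₀, _, ha, ⟨S, hA, rfl⟩, rfl⟩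
    exact ⟨g₀ ::ₘ S, .cons ha hA, Multiset.sum_cons g₀ S⟩

theorem singleton_iff : SumRel P g {a} ↔ P g a := by
  simp [← Multiset.cons_zero, cons_iff, zero_iff]

theorem add : SumRel P g A → SumRel P g' A' → SumRel P (g + g') (A + A') := by
  rintro ⟨S, hS, rfl⟩ ⟨S', hS', rfl⟩
  exact ⟨S + S', hS.add hS', Multiset.sum_add S S'⟩

theorem mono (h : ∀ a ∈ A, ∀ g, P g a → Q g a) : SumRel P g A → SumRel Q g A := by
  rintro ⟨S, hS, rfl⟩
  exact ⟨S, hS.mono fun g _ a ha => h a ha g, rfl⟩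

theorem map_eq_map {H : Type*} [AddCommMonoid H] (ψ : G →+ H) (φ : Multiset ι →+ H)
    (h : ∀ g a, P g a → ψ g = φ {a}) (hg : SumRel P g A) : ψ g = φ A := by
  induction A using Multiset.induction_on generalizing g with
  | empty => rw [zero_iff.1 hg, map_zero, map_zero]
  | cons a A ih =>
    obtain ⟨g₀, g₁, ha, hA, rfl⟩ := cons_iff.1 hg
    rw [map_add, h g₀ a ha, ih hA, ← map_add, Multiset.singleton_add]

theorem exists_of_forall_exists {H : Type*} [AddCommMonoid H] {R : H → ι → Prop}
    {E : G → H → Prop} (E_zero : E 0 0)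
    (E_add : ∀ {g₀ g₁ h₀ h₁}, E g₀ h₀ → E g₁ h₁ → E (g₀ + g₁) (h₀ + h₁))
    (hP : ∀ g a, P g a → ∃ h, R h a ∧ E g h) (hg : SumRel P g A) :
    ∃ h, SumRel R h A ∧ E g h := by
  induction A using Multiset.induction_on generalizing g with
  | empty => exact ⟨0, zero_iff.2 rfl, zero_iff.1 hg ▸ E_zero⟩
  | cons a A ih =>
    obtain ⟨g₀, g₁, ha, hA, rfl⟩ := cons_iff.1 hg
    obtain ⟨h₀, hR₀, hE₀⟩ := hP g₀ a ha
    obtain ⟨h₁, hR₁, hE₁⟩ := ih hA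
    exact ⟨h₀ + h₁, cons_iff.2 ⟨h₀, h₁, hR₀, hR₁, rfl⟩, E_add hE₀ hE₁⟩

end SumRel

end SumRel

namespace VEnv

variable {Δ Δ₀ Δ₁ : VEnv} {f : ℕ → Finset ℕ} {s t : Finset ℕ} {x : ℕ} {X : Finset ℕ}

/-- The variable environment with domain `s` and values given by `f`. -/
def ofFun (f : ℕ → Finset ℕ) (s : Finset ℕ) : VEnv :=
  Finmap.keysLookupEquiv.symm
    ⟨(s, fun x => if x ∈ s then some (f x) else none), fun x => by simp⟩

@[simp]
theorem keys_ofFun : (ofFun f s).keys = s :=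
  Finmap.keysLookupEquiv_symm_apply_keys _

@[simp]
theorem lookup_ofFun : (ofFun f s).lookup x = if x ∈ s then some (f x) else none :=
  Finmap.keysLookupEquiv_symm_apply_lookup _ _

@[simp]
theorem mem_ofFun : x ∈ ofFun f s ↔ x ∈ s := by
  rw [← Finmap.mem_keys, keys_ofFun]

theorem uni_ofFun : (ofFun f s).uni = s.biUnion f := by
  rw [uni, keys_ofFun]
  exact Finset.biUnion_congr rfl fun x hx => by simp [hx]

theorem ofFun_singleton : ofFun f {x} = Finmap.singleton x (f x) := by
  refine Finmap.ext_lookup fun z => ?_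
  rcases eq_or_ne z x with rfl | hz
  · simp
  · simp [hz, Finmap.lookup_eq_none.2]

theorem ofFun_union : ofFun f (s ∪ t) = ofFun f s ∪ ofFun f t := by
  refine Finmap.ext_lookup fun z => ?_
  by_cases hz : z ∈ s
  · simp [hz, Finmap.lookup_union_left]
  · simp [hz, Finmap.lookup_union_right]

theorem coh_ofFun : Coh (ofFun f s) (ofFun f t) := by
  intro x hs ht
  simp_all

theorem insert_ofFun_erase (hx : x ∈ s) :
    (ofFun f (s.erase x)).insert x X = ofFun (Function.update f x X) s := by
  refine Finmap.ext_lookup fun z => ?_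
  rcases eq_or_ne z x with rfl | hz
  · simp [hx]
  · simp [hz]

/-- The total map `f` extends the partial map `Δ`. -/
def ExtendedBy (Δ : VEnv) (f : ℕ → Finset ℕ) : Prop :=
  ∀ x ∈ Δ, Δ.lookup x = some (f x)

theorem exists_extendedBy (Δ : VEnv) : ∃ f, Δ.ExtendedBy f := by
  refine ⟨fun x => (Δ.lookup x).getD ∅, fun x hx => ?_⟩
  obtain ⟨X, hX⟩ := Finmap.mem_iff.1 hx
  simp [hX]

namespace ExtendedBy

theorem eq_ofFun (h : Δ.ExtendedBy f) : Δ = ofFun f Δ.keys := by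
  refine Finmap.ext_lookup fun x => ?_
  by_cases hx : x ∈ Δ
  · simp [Finmap.mem_keys, hx, h x hx]
  · simp [Finmap.mem_keys, hx, Finmap.lookup_eq_none.2]

theorem uni_eq (h : Δ.ExtendedBy f) : Δ.uni = Δ.keys.biUnion f :=
  (congrArg uni h.eq_ofFun).trans uni_ofFun

theorem of_union_left (h : ExtendedBy (Δ₀ ∪ Δ₁) f) : Δ₀.ExtendedBy f := fun x hx =>
  (Finmap.lookup_union_left hx).symm.trans (h x (Finmap.mem_union.2 (.inl hx)))

theorem of_union_right (h : ExtendedBy (Δ₀ ∪ Δ₁) f) (hc : Coh Δ₀ Δ₁) : Δ₁.ExtendedBy f := by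
  intro x hx₁
  by_cases hx₀ : x ∈ Δ₀
  · rw [← hc x hx₀ hx₁, h.of_union_left x hx₀]
  · rw [← Finmap.lookup_union_right hx₀, h x (Finmap.mem_union.2 (.inr hx₁))]

theorem insert (h : Δ.ExtendedBy f) :
    ExtendedBy (Δ.insert x X) (Function.update f x X) := by
  intro z hz
  rcases eq_or_ne z x with rfl | hzx
  · simp
  · have hzΔ : z ∈ Δ := by simpa [hzx] using hz
    rw [Finmap.lookup_insert_of_ne _ hzx, h z hzΔ, Function.update_of_ne hzx]

end ExtendedBy

end VEnv

namespace MTy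

/-- If the multiset type `m` is empty, then its annotation is `X`. -/
def IsAnnotatedBy (X : Finset ℕ) : MTy → Prop
  | empty Y => Y = X
  | mk _ _ => True

theorem exists_isAnnotatedBy_toM_eq (X : Finset ℕ) (A : Multiset STy) :
    ∃ m : MTy, m.IsAnnotatedBy X ∧ m.toM = A := by
  induction A using Quot.inductionOn with
  | h l =>
    cases l with
    | nil => exact ⟨empty X, rfl, rfl⟩
    | cons α l => exact ⟨mk α l, trivial, rfl⟩

end MTy

namespace Lam

/-- `M.HasSTy f Γ β` is the judgement `Γ; Δ ⊢ M : β` for the restriction `Δ` of the total map `f`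
to `fv M`. Defining it by recursion on `M` makes the inversion of the typing rules definitional;
`MTy.arr` lets one clause cover each of the pairs of rules `(!⁰)`, `(!⁺)` and `(λ⁰)`, `(λ⁺)`. -/
def HasSTy : Lam → (ℕ → Finset ℕ) → TEnv → STy → Prop
  | var x, _, Γ, β => Γ = Finsupp.single x {β}
  | app M N, f, Γ, β => ∃ (m : MTy) (Γ₀ Γ₁ : TEnv), M.HasSTy f Γ₀ (m.arr β) ∧
      (m.IsAnnotatedBy (N.fv.biUnion f) ∧ SumRel (N.HasSTy f) Γ₁ m.toM) ∧ Γ = Γ₀ + Γ₁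
  | lam x M, f, Γ, γ => x ∈ M.fv ∧ Γ x = 0 ∧ ∃ (X : Finset ℕ) (m : MTy) (β : STy),
      m.IsAnnotatedBy X ∧ γ = m.arr β ∧
        M.HasSTy (Function.update f x X) (Γ + Finsupp.single x m.toM) β

/-- The judgement `Γ; Δ ⊢! M : m` for the restriction `Δ` of `f` to `fv M`. -/
def HasMTy (M : Lam) (f : ℕ → Finset ℕ) (Γ : TEnv) (m : MTy) : Prop :=
  m.IsAnnotatedBy (M.fv.biUnion f) ∧ SumRel (M.HasSTy f) Γ m.toM

/-- The judgement `Γ; Δ ⊢ M : σ` for the restriction `Δ` of `f` to `fv M`. -/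
def HasOTy (M : Lam) (f : ℕ → Finset ℕ) (Γ : TEnv) : OTy → Prop
  | .esum X => Γ = 0 ∧ X = M.fv.biUnion f
  | .simple β => M.HasSTy f Γ β

end Lam

/-! ### Comparison with the original system -/

mutual

theorem Der.keys_eq_fv {Γ : TEnv} {Δ : VEnv} {M : Lam} {σ : OTy} :
    Der Γ Δ M σ → Δ.keys = M.fv
  | .esum h => h
  | .ax x _ X => Finmap.keys_singleton x X
  | .app hM hN _ => by rw [Finmap.keys_union, hM.keys_eq_fv, hN.keys_eq_fv, Lam.fv]
  | .lam0 (x := x) _ hx h | .lamP (x := x) _ hx h => by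
    rw [Lam.fv, ← h.keys_eq_fv]
    ext z
    rcases eq_or_ne z x with rfl | hz <;> simp [*, Finmap.mem_keys]

theorem DerB.keys_eq_fv {Γ : TEnv} {Δ : VEnv} {M : Lam} {m : MTy} :
    DerB Γ Δ M m → Δ.keys = M.fv
  | .bang0 h => h
  | .one h | .cons h _ => h.keys_eq_fv

end

mutual

theorem Der.hasOTy {Γ : TEnv} {Δ : VEnv} {M : Lam} {σ : OTy} {f : ℕ → Finset ℕ} :
    Der Γ Δ M σ → Δ.ExtendedBy f → M.HasOTy f Γ σ
  | .esum h, hf => ⟨rfl, h ▸ hf.uni_eq⟩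
  | .ax _ _ _, _ => rfl
  | .app hM hN hc, hf =>
    ⟨_, _, _, hM.hasOTy hf.of_union_left, hN.hasMTy (hf.of_union_right hc), rfl⟩
  | .lam0 (X := X) (β := β) h₀ hx h, hf => by
    refine ⟨h.keys_eq_fv ▸ by simp [Finmap.mem_keys], h₀, X, .empty X, β, rfl, rfl, ?_⟩
    simpa only [Lam.HasOTy, MTy.toM, Finsupp.single_zero, add_zero] using h.hasOTy hf.insert
  | .lamP (X := X) (α := α) (l := l) (β := β) h₀ hx h, hf =>
    ⟨h.keys_eq_fv ▸ by simp [Finmap.mem_keys], h₀, X, .mk α l, β, trivial, rfl,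
      h.hasOTy hf.insert⟩

theorem DerB.hasMTy {Γ : TEnv} {Δ : VEnv} {M : Lam} {m : MTy} {f : ℕ → Finset ℕ} :
    DerB Γ Δ M m → Δ.ExtendedBy f → M.HasMTy f Γ m
  | .bang0 h, hf => ⟨h ▸ hf.uni_eq, SumRel.zero_iff.2 rfl⟩
  | .one h, hf => ⟨trivial, SumRel.singleton_iff.2 (h.hasOTy hf)⟩
  | .cons h hs, hf =>
    ⟨trivial, SumRel.cons_iff (P := M.HasSTy f) |>.2
      ⟨_, _, h.hasOTy hf, (hs.hasMTy hf).2, rfl⟩⟩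

end

section Comparison

variable {Γ : TEnv} {Δ : VEnv} {M : Lam} {σ : OTy} {m : MTy} {f : ℕ → Finset ℕ}

namespace Lam

theorem HasMTy.derB (hM : ∀ Γ β, M.HasSTy f Γ β → Der Γ (.ofFun f M.fv) M (.simple β)) :
    M.HasMTy f Γ m → DerB Γ (.ofFun f M.fv) M m := by
  rintro ⟨hm, h⟩
  cases m with
  | empty X =>
    obtain rfl : X = M.fv.biUnion f := hm
    obtain rfl : Γ = 0 := SumRel.zero_iff.1 h
    rw [← VEnv.uni_ofFun]
    exact .bang0 VEnv.keys_ofFun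
  | mk α l =>
    induction l generalizing α Γ with
    | nil => exact .one (hM Γ α (SumRel.singleton_iff.1 h))
    | cons α' l ih =>
      obtain ⟨Γ₀, Γ₁, hα, hl, rfl⟩ :=
        SumRel.cons_iff (A := (MTy.mk α' l).toM) |>.1 h
      exact .cons (hM Γ₀ α hα) (ih α' trivial hl)

theorem HasSTy.der {β : STy} (h : M.HasSTy f Γ β) : Der Γ (.ofFun f M.fv) M (.simple β) := by
  induction M generalizing f Γ β with
  | var x =>
    obtain rfl : Γ = Finsupp.single x {β} := h
    rw [fv, VEnv.ofFun_singleton]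
    exact .ax x β (f x)
  | app M N ihM ihN =>
    obtain ⟨m, Γ₀, Γ₁, hM, hN, rfl⟩ := h
    rw [fv, VEnv.ofFun_union]
    exact .app (ihM hM) (HasMTy.derB (fun _ _ => ihN) hN) VEnv.coh_ofFun
  | lam x M ih =>
    obtain ⟨hx, h₀, X, m, β, hm, rfl, h⟩ := h
    have hxΔ : x ∉ VEnv.ofFun f (M.fv.erase x) := by simp
    have hM := ih h
    rw [← VEnv.insert_ofFun_erase hx] at hM
    cases m with
    | empty Y =>
      obtain rfl : Y = X := hm
      simp only [MTy.toM, Finsupp.single_zero, add_zero] at hM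
      exact .lam0 h₀ hxΔ hM
    | mk α l => exact .lamP h₀ hxΔ hM

theorem HasOTy.der (h : M.HasOTy f Γ σ) : Der Γ (.ofFun f M.fv) M σ := by
  cases σ with
  | esum X =>
    obtain ⟨rfl, rfl⟩ := h
    rw [← VEnv.uni_ofFun]
    exact .esum VEnv.keys_ofFun
  | simple β => exact HasSTy.der h

end Lam

theorem der_iff : Der Γ Δ M σ ↔ ∃ f, Δ = .ofFun f M.fv ∧ M.HasOTy f Γ σ := by
  constructor
  · intro h
    obtain ⟨f, hf⟩ := Δ.exists_extendedBy
    exact ⟨f, h.keys_eq_fv ▸ hf.eq_ofFun, h.hasOTy hf⟩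
  · rintro ⟨f, rfl, h⟩
    exact h.der

end Comparison

namespace Lam

variable {M N : Lam} {τ : ℕ → Lam} {x y : ℕ}

/-! ### Free variables -/

theorem freshVar_notMem (s : Finset ℕ) : freshVar s ∉ s := fun h =>
  (Finset.le_sup (f := id) h).not_gt (Nat.lt_succ_self _)

theorem notMem_fv_of_freshVar {s : Finset ℕ} {z : ℕ} (hz : z ∈ s) :
    freshVar (s.biUnion fun z => (τ z).fv) ∉ (τ z).fv := fun h =>
  freshVar_notMem _ (Finset.mem_biUnion.2 ⟨z, hz, h⟩)

theorem biUnion_update_erase {s : Finset ℕ} (hy : ∀ z ∈ s.erase x, y ∉ (τ z).fv) :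
    (s.biUnion fun z => (Function.update τ x (var y) z).fv).erase y =
      (s.erase x).biUnion fun z => (τ z).fv := by
  ext w
  simp only [Finset.mem_erase, Finset.mem_biUnion] at hy ⊢
  constructor
  · rintro ⟨hw, z, hz, hwz⟩
    rcases eq_or_ne z x with rfl | hzx
    · simp [fv, hw] at hwz
    · exact ⟨z, ⟨hzx, hz⟩, by simpa [hzx] using hwz⟩
  · rintro ⟨z, ⟨hzx, hz⟩, hwz⟩
    exact ⟨fun h => hy z ⟨hzx, hz⟩ (h ▸ hwz), z, hz, by simpa [hzx] using hwz⟩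

theorem fv_substF : (M.substF τ).fv = M.fv.biUnion fun z => (τ z).fv := by
  induction M generalizing τ with
  | var x => simp [substF, fv]
  | app M N ihM ihN => rw [substF, fv, ihM, ihN, fv, Finset.union_biUnion]
  | lam x M ih =>
    rw [substF, fv, ih, fv, biUnion_update_erase fun z => notMem_fv_of_freshVar]

theorem subst_eq_substF_update : M.subst x N = M.substF (Function.update var x N) := by
  rw [subst]
  congr 1
  ext z
  rw [Function.update_apply]

theorem fv_subst (hx : x ∈ M.fv) : (M.subst x N).fv = M.fv.erase x ∪ N.fv := by
  rw [subst_eq_substF_update, fv_substF, ← Finset.insert_erase hx, Finset.biUnion_insert,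
    Finset.union_comm, Finset.erase_insert (Finset.notMem_erase x _), Function.update_self]
  congr 1
  calc _ = (M.fv.erase x).biUnion singleton := Finset.biUnion_congr rfl fun z hz => by
        rw [Function.update_of_ne (Finset.ne_of_mem_erase hz), fv]
    _ = M.fv.erase x := Finset.biUnion_singleton_eq_self

end Lam

theorem Beta.fv_eq {M N : Lam} (h : Beta M N) (hM : M.IsI) : N.fv = M.fv := by
  induction h with
  | beta x M N => exact Lam.fv_subst hM.1.1
  | appL N _ ih => rw [Lam.fv, ih hM.1, Lam.fv]
  | appR M _ ih => rw [Lam.fv, ih hM.2, Lam.fv]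
  | lam x _ ih => rw [Lam.fv, ih hM.2, Lam.fv]

/-! ### Anti-substitution -/

namespace Lam

variable {M N P : Lam} {τ : ℕ → Lam} {f g : ℕ → Finset ℕ} {Γ Γ₀ Γ₁ Γ' Γ₀' Γ₁' : TEnv}
  {A : Multiset STy} {X : Finset ℕ} {β : STy} {x y : ℕ}

theorem HasSTy.congr (hfg : ∀ z ∈ M.fv, f z = g z) (h : M.HasSTy f Γ β) : M.HasSTy g Γ β := by
  induction M generalizing f g Γ β with
  | var x => exact h
  | app M N ihM ihN =>
    simp only [fv, Finset.mem_union] at hfg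
    obtain ⟨m, Γ₀, Γ₁, hM, ⟨hm, hN⟩, rfl⟩ := h
    have hu : N.fv.biUnion f = N.fv.biUnion g :=
      Finset.biUnion_congr rfl fun z hz => hfg z (.inr hz)
    exact ⟨m, Γ₀, Γ₁, ihM (fun z hz => hfg z (.inl hz)) hM,
      ⟨hu ▸ hm, hN.mono fun _ _ _ => ihN fun z hz => hfg z (.inr hz)⟩, rfl⟩
  | lam x M ih =>
    obtain ⟨hx, h₀, X, m, β, hm, rfl, h⟩ := h
    refine ⟨hx, h₀, X, m, β, hm, rfl, ih (fun z hz => ?_) h⟩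
    rcases eq_or_ne z x with rfl | hzx
    · simp only [Function.update_self]
    · simpa only [Function.update_of_ne hzx] using hfg z (Finset.mem_erase.2 ⟨hzx, hz⟩)

theorem HasSTy.apply_eq_zero (hy : y ∉ M.fv) (h : M.HasSTy f Γ β) : Γ y = 0 := by
  induction M generalizing f Γ β with
  | var x =>
    obtain rfl : Γ = Finsupp.single x {β} := h
    exact Finsupp.single_eq_of_ne (by simpa [fv] using hy)
  | app M N ihM ihN =>
    rw [fv, Finset.notMem_union] at hy
    obtain ⟨m, Γ₀, Γ₁, hM, ⟨-, hN⟩, rfl⟩ := h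
    have hN₀ : Γ₁ y = 0 :=
      hN.map_eq_map (Finsupp.applyAddHom y) 0 fun _ _ hα => ihN hy.2 hα
    rw [Finsupp.add_apply, ihM hy.1 hM, hN₀, add_zero]
  | lam x M ih =>
    obtain ⟨-, h₀, X, m, β, -, rfl, h⟩ := h
    rcases eq_or_ne y x with rfl | hyx
    · exact h₀
    · simpa [hyx] using ih (fun hyM => hy (Finset.mem_erase.2 ⟨hyx, hyM⟩)) h

theorem sumRel_var_hasSTy (h : SumRel ((var x).HasSTy f) Γ A) : Γ = Finsupp.single x A :=
  h.map_eq_map (AddMonoidHom.id TEnv) (Finsupp.singleAddHom x) fun _ _ h => h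

/-- Typing of a substitution `τ`: `Γ` is the sum of environments in which the terms `τ z` receive
the types in `Γ' z`, each occurrence of a type in `Γ'` being served once. -/
inductive SubstTyping (τ : ℕ → Lam) (f : ℕ → Finset ℕ) : TEnv → TEnv → Prop
  | zero : SubstTyping τ f 0 0
  | single_add {z : ℕ} {β : STy} {Γ₀ Γ Γ' : TEnv} : (τ z).HasSTy f Γ₀ β → SubstTyping τ f Γ Γ' →
      SubstTyping τ f (Γ₀ + Γ) (Finsupp.single z {β} + Γ')

namespace SubstTyping

theorem single (h : (τ x).HasSTy f Γ β) : SubstTyping τ f Γ (Finsupp.single x {β}) := by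
  simpa only [add_zero] using zero.single_add h

theorem add (h₀ : SubstTyping τ f Γ₀ Γ₀') (h₁ : SubstTyping τ f Γ₁ Γ₁') :
    SubstTyping τ f (Γ₀ + Γ₁) (Γ₀' + Γ₁') := by
  induction h₀ with
  | zero => simpa only [zero_add] using h₁
  | single_add h _ ih => simpa only [add_assoc] using ih.single_add h

theorem eq_of_var (h : SubstTyping var f Γ Γ') : Γ = Γ' := by
  induction h with
  | zero => rfl
  | single_add h _ ih => exact congrArg₂ _ h ih

theorem apply_eq_zero (hy : ∀ z, Γ' z ≠ 0 → y ∉ (τ z).fv) (h : SubstTyping τ f Γ Γ') :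
    Γ y = 0 := by
  induction h with
  | zero => rfl
  | @single_add z β Γ₀ Γ Γ' h _ ih =>
    have hz : y ∉ (τ z).fv := hy z (by simp)
    have hΓ : Γ y = 0 := ih fun w hw => hy w (by simp [hw])
    rw [Finsupp.add_apply, h.apply_eq_zero hz, hΓ, add_zero]

theorem congr (hfg : ∀ z, Γ' z ≠ 0 → ∀ w ∈ (τ z).fv, f w = g w) (h : SubstTyping τ f Γ Γ') :
    SubstTyping τ g Γ Γ' := by
  induction h with
  | zero => exact zero
  | @single_add z β Γ₀ Γ Γ' h _ ih =>
    exact single_add (h.congr (hfg z (by simp))) (ih fun w hw => hfg w (by simp [hw]))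

theorem exists_of_update (h : SubstTyping (Function.update τ x P) f Γ Γ') :
    ∃ Γ₀ Γ₁, SumRel (P.HasSTy f) Γ₀ (Γ' x) ∧ SubstTyping τ f Γ₁ (Γ'.erase x) ∧
      Γ = Γ₀ + Γ₁ := by
  induction h with
  | zero => exact ⟨0, 0, SumRel.zero_iff.2 rfl, by simpa using zero, (add_zero 0).symm⟩
  | @single_add z β Γz Γ Γ' h _ ih =>
    obtain ⟨Γ₀, Γ₁, hP, hτ, rfl⟩ := ih
    rcases eq_or_ne z x with rfl | hzx
    · rw [Function.update_self] at h
      exact ⟨Γz + Γ₀, Γ₁, by simpa using (SumRel.singleton_iff.2 h).add hP, by simpa using hτ,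
        (add_assoc _ _ _).symm⟩
    · rw [Function.update_of_ne hzx] at h
      refine ⟨Γ₀, Γz + Γ₁, by simpa [hzx.symm] using hP, ?_, add_left_comm _ _ _⟩
      rw [Finsupp.erase_add, Finsupp.erase_single_ne hzx.symm]
      exact hτ.single_add h

theorem of_update_var (hy : ∀ z ≠ x, Γ' z ≠ 0 → y ∉ (τ z).fv) (h₀ : Γ y = 0)
    (h : SubstTyping (Function.update τ x (var y)) (Function.update f y X)
      (Γ + Finsupp.single y A) Γ') :
    Γ' x = A ∧ SubstTyping τ f Γ (Γ'.erase x) := by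
  obtain ⟨Γ₀, Γ₁, hvar, hτ, hΓ⟩ := h.exists_of_update
  obtain rfl : Γ₀ = Finsupp.single y (Γ' x) := sumRel_var_hasSTy hvar
  have hy' (z : ℕ) (hz : Γ'.erase x z ≠ 0) : y ∉ (τ z).fv := by
    have hzx : z ≠ x := by
      rintro rfl
      exact hz Finsupp.erase_same
    exact hy z hzx (by rwa [Finsupp.erase_ne hzx] at hz)
  obtain rfl : A = Γ' x := by
    simpa [h₀, hτ.apply_eq_zero hy'] using DFunLike.congr_fun hΓ y
  obtain rfl : Γ = Γ₁ := by rwa [add_comm, add_right_inj] at hΓ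
  exact ⟨rfl, hτ.congr fun z hz w hw =>
    Function.update_of_ne (fun hwy : w = y => hy' z hz (hwy ▸ hw)) _ _⟩

end SubstTyping

theorem HasSTy.of_update_var (hy : ∀ z ∈ M.fv, z ≠ x → y ∉ (τ z).fv)
    (h : M.HasSTy (fun z => (Function.update τ x (var y) z).fv.biUnion (Function.update f y X))
      Γ β) :
    M.HasSTy (Function.update (fun z => (τ z).fv.biUnion f) x X) Γ β := by
  refine h.congr fun z hz => ?_
  rcases eq_or_ne z x with rfl | hzx
  · simp [fv]
  · simp only [Function.update_of_ne hzx]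
    exact Finset.biUnion_congr rfl fun w hw =>
      Function.update_of_ne (fun hwy : w = y => hy z hz hzx (hwy ▸ hw)) _ _

theorem HasSTy.exists_of_substF (h : (M.substF τ).HasSTy f Γ β) :
    ∃ Γ', M.HasSTy (fun z => (τ z).fv.biUnion f) Γ' β ∧ SubstTyping τ f Γ Γ' := by
  induction M generalizing τ f Γ β with
  | var x => exact ⟨Finsupp.single x {β}, rfl, .single h⟩
  | app M N ihM ihN =>
    obtain ⟨m, Γ₀, Γ₁, hM, ⟨hm, hN⟩, rfl⟩ := h
    obtain ⟨Γ₀', hM', hτ₀⟩ := ihM hM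
    obtain ⟨Γ₁', hN', hτ₁⟩ :=
      hN.exists_of_forall_exists SubstTyping.zero SubstTyping.add fun _ _ => ihN
    rw [fv_substF, Finset.biUnion_biUnion] at hm
    exact ⟨Γ₀' + Γ₁', ⟨m, Γ₀', Γ₁', hM', ⟨hm, hN'⟩, rfl⟩, hτ₀.add hτ₁⟩
  | lam x M ih =>
    obtain ⟨hyM, h₀, X, m, β, hm, rfl, h⟩ := h
    set y := freshVar ((M.fv.erase x).biUnion fun z => (τ z).fv)
    have hy (z : ℕ) (hz : z ∈ M.fv) (hzx : z ≠ x) : y ∉ (τ z).fv :=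
      notMem_fv_of_freshVar (Finset.mem_erase.2 ⟨hzx, hz⟩)
    have hx : x ∈ M.fv := by
      rw [fv_substF, Finset.mem_biUnion] at hyM
      obtain ⟨z, hz, hyz⟩ := hyM
      by_contra hx
      have hzx : z ≠ x := ne_of_mem_of_not_mem hz hx
      exact hy z hz hzx (by rwa [Function.update_of_ne hzx] at hyz)
    obtain ⟨Γ', hM, hτ⟩ := ih h
    have hsupp (z : ℕ) (hz : Γ' z ≠ 0) : z ∈ M.fv := not_imp_comm.1 hM.apply_eq_zero hz
    obtain ⟨hxm, hτ⟩ := hτ.of_update_var (fun z hzx hz => hy z (hsupp z hz) hzx) h₀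
    refine ⟨Γ'.erase x, ⟨hx, Finsupp.erase_same, X, m, β, hm, rfl, ?_⟩, hτ⟩
    rw [← hxm, Finsupp.erase_add_single]
    exact hM.of_update_var hy

/-! ### Expansion -/

theorem HasSTy.app_lam_of_subst (hx : x ∈ M.fv) (h : (M.subst x N).HasSTy f Γ β) :
    (app (lam x M) N).HasSTy f Γ β := by
  rw [subst_eq_substF_update] at h
  obtain ⟨Γ', hM, hτ⟩ := h.exists_of_substF
  obtain ⟨Γ₁, Γ₀, hN, hvar, rfl⟩ := hτ.exists_of_update
  obtain rfl : Γ₀ = Γ'.erase x := hvar.eq_of_var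
  obtain ⟨m, hm, hmA⟩ := MTy.exists_isAnnotatedBy_toM_eq (N.fv.biUnion f) (Γ' x)
  refine ⟨m, Γ'.erase x, Γ₁, ⟨hx, Finsupp.erase_same, _, m, β, hm, rfl, ?_⟩, ⟨hm, hmA ▸ hN⟩,
    add_comm _ _⟩
  rw [hmA, Finsupp.erase_add_single]
  refine hM.congr fun z _ => ?_
  rcases eq_or_ne z x with rfl | hzx
  · simp only [Function.update_self]
  · simp only [Function.update_of_ne hzx, fv, Finset.singleton_biUnion]

theorem HasSTy.of_beta (h : N.HasSTy f Γ β) (hr : Beta M N) (hM : M.IsI) : M.HasSTy f Γ β := by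
  induction hr generalizing f Γ β with
  | beta x M N => exact h.app_lam_of_subst hM.1.1
  | appL N _ ih =>
    obtain ⟨m, Γ₀, Γ₁, h, hN, rfl⟩ := h
    exact ⟨m, Γ₀, Γ₁, ih h hM.1, hN, rfl⟩
  | appR P hr ih =>
    obtain ⟨m, Γ₀, Γ₁, hP, ⟨hm, h⟩, rfl⟩ := h
    rw [hr.fv_eq hM.2] at hm
    exact ⟨m, Γ₀, Γ₁, hP, ⟨hm, h.mono fun _ _ _ hα => ih hα hM.2⟩, rfl⟩
  | lam x _ ih =>
    obtain ⟨-, h₀, X, m, β, hm, rfl, h⟩ := h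
    exact ⟨hM.1, h₀, X, m, β, hm, rfl, ih h hM.2⟩

theorem HasOTy.of_beta {σ : OTy} (h : N.HasOTy f Γ σ) (hr : Beta M N) (hM : M.IsI) :
    M.HasOTy f Γ σ := by
  cases σ with
  | esum X => exact ⟨h.1, h.2.trans (by rw [hr.fv_eq hM])⟩
  | simple β => exact HasSTy.of_beta h hr hM

end Lam

/-- Subject Expansion. -/
theorem stmt5 (Γ : TEnv) (Δ : VEnv) (M N : Lam) (σ : OTy) (hM : M.IsI)
    (h : Der Γ Δ N σ) (hr : Beta M N) : Der Γ Δ M σ := by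
  obtain ⟨f, rfl, hN⟩ := der_iff.1 h
  exact der_iff.2 ⟨f, by rw [hr.fv_eq hM], hN.of_beta hr hM⟩
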